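/- arXiv:2603.18878 — 4 statements merged into one kernel-verified Lean document; each statement's English description precedes it below -/
import Mathlib

section
/- Let (V, parent) be an unrooted leafless directed tree and fix v0 ∈ V to enumerate the generations. Then V has a free left end (i.e., there exists n ∈ ℤ such that Gen_k is a singleton for every integer k ≤ n) if and only if there exists n ∈ ℤ for which Gen_n is a finite set. -/
/-!
If `Gen_n` is finite, then all of its (finitely many) elements are merged with the forward orbit
of `v0` by a common time: there is `M` such that `parent^[n + M] v = parent^[M] v0` for every
`v ∈ Gen_n` (`eventually_eq_of_mem_gen` and finiteness). As `parent` is surjective, every element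
of `Gen_{-K}` with `K ≥ M` is of the form `parent^[n + K] v` with `v ∈ Gen_n`, and therefore equals
`parent^[K] v0`. The other direction is immediate.
-/

open Filter Function

noncomputable section

/-- The `n`-th generation of an unrooted leafless directed tree `(V, parent)` with
respect to the fixed vertex `v0`. -/
def gen {V : Type*} (parent : V → V) (v0 : V) (n : ℤ) : Set V :=
  {v | ∃ m : ℕ, max (-n) 0 ≤ (m : ℤ) ∧ parent^[(n + (m : ℤ)).toNat] v = parent^[m] v0}

/-- Once the forward orbit of a vertex of `Gen_n` has met the orbit of `v0` at the same level,
the two orbits agree forever. -/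
theorem eventually_eq_of_mem_gen {V : Type*} {parent : V → V} {v0 v : V} {n : ℤ}
    (hv : v ∈ gen parent v0 n) :
    ∀ᶠ m : ℕ in atTop, max (-n) 0 ≤ (m : ℤ) ∧
      parent^[(n + (m : ℤ)).toNat] v = parent^[m] v0 := by
  obtain ⟨m, hm, h⟩ := hv
  filter_upwards [eventually_ge_atTop m] with j hj
  refine ⟨by omega, ?_⟩
  rw [show (n + (j : ℤ)).toNat = (j - m) + (n + (m : ℤ)).toNat by omega, iterate_add_apply, h,
    ← iterate_add_apply, Nat.sub_add_cancel hj]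

/-- `V` has a free left end (some `n ∈ ℤ` such that `Gen_k` is a singleton for all
`k ≤ n`) if and only if some generation `Gen_n` is finite. -/
theorem stmt2 {V : Type*} [Countable V] (parent : V → V)
    (hsurj : Function.Surjective parent)
    (hacyc : ∀ (v : V) (n : ℕ), 1 ≤ n → parent^[n] v ≠ v)
    (hconn : ∀ u v : V, ∃ m k : ℕ, parent^[m] u = parent^[k] v)
    (v0 : V) :
    (∃ n : ℤ, ∀ k : ℤ, k ≤ n → ∃ w : V, gen parent v0 k = {w}) ↔
      ∃ n : ℤ, (gen parent v0 n).Finite := by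
  constructor
  · rintro ⟨n, h⟩
    obtain ⟨w, hw⟩ := h n le_rfl
    exact ⟨n, hw ▸ Set.finite_singleton w⟩
  · rintro ⟨n, hfin⟩
    have hM := (eventually_all_finite hfin).2 fun v hv => eventually_eq_of_mem_gen hv
    -- Requiring `-n ≤ M` outright avoids extracting it from `hM`, which needs `Gen_n` nonempty.
    obtain ⟨M, hM, hnM⟩ := (hM.and (eventually_ge_atTop (-n).toNat)).exists
    refine ⟨-(M : ℤ), fun k hk => ⟨parent^[(-k).toNat] v0, ?_⟩⟩
    obtain ⟨K, rfl⟩ : ∃ K : ℕ, k = -(K : ℤ) := ⟨(-k).toNat, by omega⟩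
    rw [neg_neg, Int.toNat_natCast]
    ext u
    rw [Set.mem_singleton_iff]
    constructor
    · rintro ⟨m, hm, h⟩
      obtain ⟨v, rfl⟩ := hsurj.iterate (n + (K : ℤ)).toNat u
      have hv : v ∈ gen parent v0 n := by
        refine ⟨m, by omega, ?_⟩
        rw [← h, ← iterate_add_apply]
        congr 2
        omega
      rw [show (n + (K : ℤ)).toNat = (K - M) + (n + (M : ℤ)).toNat by omega, iterate_add_apply,
        (hM v hv).2, ← iterate_add_apply, Nat.sub_add_cancel (by omega)]
    · rintro rfl
      exact ⟨K, by omega, by simp⟩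
end
end

section
/- Let V be a countable set, 1 ≤ p < ∞, X = ℓp(V) over the real or complex scalars, and let T : X → X be a bounded linear operator. Then T is chain recurrent if and only if for every canonical unit vector e_v (v ∈ V) and every δ > 0 there exist a δ-chain for T from e_v to 0 and a δ-chain for T from 0 to e_v. -/
/-!
Write `x ⇝ y` when there is a `δ`-chain from `x` to `y`.

If `T` is chain recurrent on a connected space, then the set of points reachable from `x` is
nonempty (it contains `T x`), open (the last step of a chain can be moved a little), and closed:
if `y'` is reachable and close to `y`, then a fine chain from `y` to itself becomes a chain from `y'`
to `y` once its first point is replaced. So it is everything (`ChainRecurrent.hasDeltaChain`), and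
in particular each `e_v` is connected to `0` in both directions.

Conversely, the vectors connected to `0` in both directions for every `δ` form a closed linear
subspace (`zeroLinked`): scaling a chain scales `δ`, and two chains can be added once they have the
same length, which is arranged by waiting at the fixed point `0`. Since the `e_v` span a dense
subspace of `ℓp(V)` for `p < ∞`, this subspace is everything, and `x ⇝ 0 ⇝ x`.
-/


open Filter Function
open scoped ENNReal

noncomputable section

/-- A `δ`-chain for `T` from `x` to `y`: a finite sequence `x = f 0, …, f n = y` with
`n ≥ 1` and `dist (T (f (l-1))) (f l) < δ` for every `1 ≤ l ≤ n`. -/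
def HasDeltaChain {X : Type*} [PseudoMetricSpace X] (T : X → X) (δ : ℝ) (x y : X) : Prop :=
  ∃ n : ℕ, 1 ≤ n ∧ ∃ f : ℕ → X, f 0 = x ∧ f n = y ∧
    ∀ l : ℕ, 1 ≤ l → l ≤ n → dist (T (f (l - 1))) (f l) < δ

/-- `T` is chain recurrent if for every `x` and every `δ > 0` there is a `δ`-chain for
`T` from `x` to itself. -/
def ChainRecurrent {X : Type*} [PseudoMetricSpace X] (T : X → X) : Prop :=
  ∀ x : X, ∀ δ : ℝ, 0 < δ → HasDeltaChain T δ x x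

/-- There is a `δ`-chain with exactly `n` steps from `x` to `y`; for `n = 0` this means `x = y`. -/
def ChainOfLength {X : Type*} [PseudoMetricSpace X] (T : X → X) (δ : ℝ) : ℕ → X → X → Prop
  | 0, x, y => x = y
  | n + 1, x, y => ∃ z, dist (T x) z < δ ∧ ChainOfLength T δ n z y

namespace ChainOfLength

section Metric

variable {X : Type*} [PseudoMetricSpace X] {T : X → X} {δ ε : ℝ}

theorem mono (h : δ ≤ ε) : ∀ {n : ℕ} {x y : X}, ChainOfLength T δ n x y → ChainOfLength T ε n x y
  | 0, _, _, hc => hc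
  | _ + 1, _, _, ⟨z, hz, hc⟩ => ⟨z, hz.trans_le h, mono h hc⟩

theorem trans {m : ℕ} {y z : X} (h₂ : ChainOfLength T δ m y z) :
    ∀ {n : ℕ} {x : X}, ChainOfLength T δ n x y → ChainOfLength T δ (n + m) x z
  | 0, x, h => by
      obtain rfl : x = y := h
      simpa using h₂
  | n + 1, _, ⟨w, hw, hc⟩ => by
      rw [Nat.add_right_comm]
      exact ⟨w, hw, trans h₂ hc⟩

theorem exists_last : ∀ {n : ℕ} {x y : X}, ChainOfLength T δ (n + 1) x y →
    ∃ z, ChainOfLength T δ n x z ∧ dist (T z) y < δ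
  | 0, x, y, ⟨z, hz, hc⟩ => by
      obtain rfl : z = y := hc
      exact ⟨x, rfl, hz⟩
  | _ + 1, _, _, ⟨w, hw, hc⟩ => by
      obtain ⟨z, h₁, h₂⟩ := exists_last hc
      exact ⟨z, ⟨w, hw, h₁⟩, h₂⟩

theorem snoc {n : ℕ} {x y z : X} (h : ChainOfLength T δ n x y) (hz : dist (T y) z < δ) :
    ChainOfLength T δ (n + 1) x z :=
  trans (m := 1) ⟨z, hz, rfl⟩ h

theorem replace_left {n : ℕ} {x x' y : X} (h : ChainOfLength T δ (n + 1) x y)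
    (hx : dist (T x') (T x) < ε) : ChainOfLength T (δ + ε) (n + 1) x' y := by
  obtain ⟨z, hz, hc⟩ := h
  refine ⟨z, ?_, hc.mono (by linarith [dist_nonneg.trans_lt hx])⟩
  linarith [dist_triangle (T x') (T x) z]

theorem replace_right {n : ℕ} {x y y' : X} (h : ChainOfLength T δ (n + 1) x y)
    (hy : dist y y' < ε) : ChainOfLength T (δ + ε) (n + 1) x y' := by
  obtain ⟨z, hc, hz⟩ := h.exists_last
  refine (hc.mono (by linarith [dist_nonneg.trans_lt hy])).snoc ?_
  linarith [dist_triangle (T z) y y']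

theorem of_seq : ∀ {n : ℕ} (f : ℕ → X), (∀ l < n, dist (T (f l)) (f (l + 1)) < δ) →
    ChainOfLength T δ n (f 0) (f n)
  | 0, _, _ => rfl
  | _ + 1, f, h => ⟨f 1, h 0 (by omega), of_seq (fun l => f (l + 1)) fun l hl => h (l + 1) (by omega)⟩

theorem exists_seq : ∀ {n : ℕ} {x y : X}, ChainOfLength T δ n x y →
    ∃ f : ℕ → X, f 0 = x ∧ f n = y ∧ ∀ l < n, dist (T (f l)) (f (l + 1)) < δ
  | 0, x, _, h => ⟨fun _ => x, rfl, h, by simp⟩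
  | _ + 1, x, _, ⟨z, hz, hc⟩ => by
      obtain ⟨f, rfl, rfl, hf⟩ := exists_seq hc
      refine ⟨fun l => Nat.casesOn l x f, rfl, rfl, ?_⟩
      rintro (_ | l) hl
      · exact hz
      · exact hf l (by omega)

end Metric

section Linear

variable {𝕜 E : Type*} [NormedField 𝕜] [SeminormedAddCommGroup E] [NormedSpace 𝕜 E]
  {T : E →L[𝕜] E} {δ ε : ℝ}

theorem zero (hδ : 0 < δ) : ∀ n : ℕ, ChainOfLength (fun x => T x) δ n 0 0
  | 0 => rfl
  | n + 1 => ⟨0, by simpa using hδ, zero hδ n⟩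

theorem add : ∀ {n : ℕ} {x y x' y' : E}, ChainOfLength (fun x => T x) δ n x y →
    ChainOfLength (fun x => T x) ε n x' y' →
    ChainOfLength (fun x => T x) (δ + ε) n (x + x') (y + y')
  | 0, _, _, _, _, h, h' => congrArg₂ (· + ·) h h'
  | _ + 1, x, _, x', _, ⟨z, hz, hc⟩, ⟨z', hz', hc'⟩ => by
      refine ⟨z + z', ?_, add hc hc'⟩
      simp only [map_add]
      exact (dist_add_add_le _ _ _ _).trans_lt (add_lt_add hz hz')

theorem smul {c : 𝕜} (hδ : ‖c‖ * δ < ε) : ∀ {n : ℕ} {x y : E},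
    ChainOfLength (fun x => T x) δ n x y → ChainOfLength (fun x => T x) ε n (c • x) (c • y)
  | 0, _, _, h => congrArg (c • ·) h
  | _ + 1, x, _, ⟨z, hz, hc⟩ => by
      refine ⟨c • z, ?_, smul hδ hc⟩
      simp only [map_smul, dist_smul₀]
      exact (mul_le_mul_of_nonneg_left hz.le (norm_nonneg c)).trans_lt hδ

end Linear

end ChainOfLength

theorem hasDeltaChain_iff {X : Type*} [PseudoMetricSpace X] {T : X → X} {δ : ℝ} {x y : X} :
    HasDeltaChain T δ x y ↔ ∃ n, ChainOfLength T δ (n + 1) x y := by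
  constructor
  · rintro ⟨n, hn, f, rfl, rfl, hf⟩
    obtain ⟨n, rfl⟩ := Nat.exists_eq_add_of_le' hn
    exact ⟨n, .of_seq f fun l hl => hf (l + 1) (by omega) (by omega)⟩
  · rintro ⟨n, h⟩
    obtain ⟨f, h₀, hn, hf⟩ := h.exists_seq
    refine ⟨n + 1, by omega, f, h₀, hn, fun l hl hl' => ?_⟩
    obtain ⟨l, rfl⟩ := Nat.exists_eq_add_of_le' hl
    exact hf l (by omega)

/-- On a connected space, a continuous chain recurrent map is chain transitive. -/
theorem ChainRecurrent.hasDeltaChain {X : Type*} [PseudoMetricSpace X] [PreconnectedSpace X]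
    {T : X → X} (hT : Continuous T) (h : ChainRecurrent T) {δ : ℝ} (hδ : 0 < δ) (x y : X) :
    HasDeltaChain T δ x y := by
  have hclopen : IsClopen {y | HasDeltaChain T δ x y} := by
    constructor
    · refine isClosed_of_closure_subset fun y hy => ?_
      obtain ⟨η, hη, hTη⟩ := Metric.continuous_iff.1 hT y (δ / 2) (by positivity)
      obtain ⟨y', hy', hyy'⟩ := Metric.mem_closure_iff.1 hy η hη
      obtain ⟨n, hn⟩ := hasDeltaChain_iff.1 hy'
      obtain ⟨m, hm⟩ := hasDeltaChain_iff.1 (h y (δ / 2) (by positivity))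
      have hm' := hm.replace_left (hTη y' (by rwa [dist_comm]))
      rw [add_halves] at hm'
      exact hasDeltaChain_iff.2 ⟨n + 1 + m, hm'.trans hn⟩
    · refine Metric.isOpen_iff.2 fun y hy => ?_
      obtain ⟨n, hn⟩ := hasDeltaChain_iff.1 hy
      obtain ⟨z, hz, hzy⟩ := hn.exists_last
      refine ⟨δ - dist (T z) y, by linarith, fun y' hy' => hasDeltaChain_iff.2 ⟨n, hz.snoc ?_⟩⟩
      rw [Metric.mem_ball, dist_comm] at hy'
      linarith [dist_triangle (T z) y y']
  have huniv := hclopen.eq_univ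
    ⟨T x, hasDeltaChain_iff.2 ⟨0, T x, by simpa using hδ, rfl⟩⟩
  exact huniv.ge (Set.mem_univ y)

section ZeroLinked

variable {𝕜 E : Type*} [NormedField 𝕜] [SeminormedAddCommGroup E] [NormedSpace 𝕜 E]

/-- The subspace of vectors `x` which, for every `δ > 0`, have `δ`-chains from `x` to `0` and
from `0` to `x`. -/
def zeroLinked (T : E →L[𝕜] E) : Submodule 𝕜 E where
  carrier := {x | ∀ δ : ℝ, 0 < δ →
    HasDeltaChain (fun f => T f) δ x 0 ∧ HasDeltaChain (fun f => T f) δ 0 x}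
  zero_mem' δ hδ := ⟨hasDeltaChain_iff.2 ⟨0, .zero hδ 1⟩, hasDeltaChain_iff.2 ⟨0, .zero hδ 1⟩⟩
  add_mem' {x y} hx hy δ hδ := by
    have hδ' : 0 < δ / 2 := by positivity
    simp only [Set.mem_ofPred_eq, hasDeltaChain_iff] at hx hy ⊢
    obtain ⟨⟨n, hn⟩, ⟨n', hn'⟩⟩ := hx _ hδ'
    obtain ⟨⟨m, hm⟩, ⟨m', hm'⟩⟩ := hy _ hδ'
    constructor
    · -- Both chains are prolonged at their end, by waiting at `0`.
      have h₁ := ChainOfLength.trans (.zero hδ' (m + 1)) hn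
      have h₂ := ChainOfLength.trans (.zero hδ' (n + 1)) hm
      rw [add_comm (m + 1)] at h₂
      have h := h₁.add h₂
      rw [add_halves, add_zero] at h
      exact ⟨n + 1 + m, h⟩
    · -- Both chains are prolonged at their start.
      have h₁ := ChainOfLength.trans hn' (.zero hδ' (m' + 1))
      have h₂ := ChainOfLength.trans hm' (.zero hδ' (n' + 1))
      rw [add_comm (n' + 1)] at h₂
      have h := h₁.add h₂
      rw [add_halves, add_zero] at h
      exact ⟨m' + 1 + n', h⟩
  smul_mem' c x hx δ hδ := by
    have hc : 0 < ‖c‖ + 1 := by positivity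
    have hlt : ‖c‖ * (δ / (‖c‖ + 1)) < δ := by
      rw [← mul_div_assoc, div_lt_iff₀ hc]
      nlinarith
    simp only [Set.mem_ofPred_eq, hasDeltaChain_iff] at hx ⊢
    obtain ⟨⟨n, hn⟩, ⟨m, hm⟩⟩ := hx (δ / (‖c‖ + 1)) (by positivity)
    exact ⟨⟨n, by simpa using hn.smul hlt⟩, ⟨m, by simpa using hm.smul hlt⟩⟩

theorem isClosed_zeroLinked (T : E →L[𝕜] E) : IsClosed (zeroLinked T : Set E) := by
  refine isClosed_of_closure_subset fun x hx δ hδ => ?_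
  have hδ' : 0 < δ / 2 := by positivity
  obtain ⟨η, hη, hTη⟩ := Metric.continuous_iff.1 T.continuous x (δ / 2) hδ'
  obtain ⟨x', hx', hxx'⟩ := Metric.mem_closure_iff.1 hx (min η (δ / 2)) (lt_min hη hδ')
  obtain ⟨hη', hδx⟩ := lt_min_iff.1 hxx'
  obtain ⟨h₁, h₂⟩ := hx' (δ / 2) hδ'
  obtain ⟨n, hn⟩ := hasDeltaChain_iff.1 h₁
  obtain ⟨m, hm⟩ := hasDeltaChain_iff.1 h₂
  have hn' := hn.replace_left (x' := x) (ε := δ / 2) <| by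
    rw [dist_comm]
    exact hTη x' (by rwa [dist_comm])
  have hm' := hm.replace_right (y' := x) (ε := δ / 2) (by rwa [dist_comm])
  rw [add_halves] at hn' hm'
  exact ⟨hasDeltaChain_iff.2 ⟨n, hn'⟩, hasDeltaChain_iff.2 ⟨m, hm'⟩⟩

end ZeroLinked

/-- A bounded linear operator `T` on `ℓp(V)` is chain recurrent iff for every canonical
unit vector `e_v` and every `δ > 0` there are `δ`-chains from `e_v` to `0` and from `0`
to `e_v`. -/
theorem stmt4 {V : Type*} [Countable V] [DecidableEq V] {𝕜 : Type*} [RCLike 𝕜]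
    (p : ℝ≥0∞) [Fact (1 ≤ p)] (hp2 : p ≠ ⊤)
    (T : lp (fun _ : V => 𝕜) p →L[𝕜] lp (fun _ : V => 𝕜) p) :
    ChainRecurrent (fun f => T f) ↔
      ∀ v : V, ∀ δ : ℝ, 0 < δ →
        HasDeltaChain (fun f => T f) δ (lp.single p v (1 : 𝕜)) 0 ∧
          HasDeltaChain (fun f => T f) δ 0 (lp.single p v (1 : 𝕜)) := by
  constructor
  · intro h v δ hδ
    exact ⟨h.hasDeltaChain T.continuous hδ _ _, h.hasDeltaChain T.continuous hδ _ _⟩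
  · intro h x δ hδ
    have hx : x ∈ zeroLinked T := by
      refine (isClosed_zeroLinked T).mem_of_tendsto (lp.hasSum_single hp2 x)
        (.of_forall fun s => (zeroLinked T).sum_mem fun v _ => ?_)
      have hv : lp.single p v (x v) =
          x v • (lp.single p v (1 : 𝕜) : lp (fun _ : V => 𝕜) p) := by
        rw [← lp.single_smul, smul_eq_mul, mul_one]
      rw [hv]
      exact (zeroLinked T).smul_mem _ (h v)
    obtain ⟨h₁, h₂⟩ := hx δ hδ
    obtain ⟨n, hn⟩ := hasDeltaChain_iff.1 h₁
    obtain ⟨m, hm⟩ := hasDeltaChain_iff.1 h₂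
    exact hasDeltaChain_iff.2 ⟨n + 1 + m, hm.trans hn⟩
end
end

section
/- Let (V, parent) be an unrooted leafless directed tree, let λ = (λ_v)_{v∈V} be nonzero real or complex weights, and suppose the weighted backward shift B_λ defines a bounded linear operator on X = ℓ1(V). Then B_λ is chain recurrent if and only if for every v ∈ V: (i) ∑_{n=1}^∞ sup_{u ∈ Child^n(v)} |λ(v→u)| = ∞, and (ii) the sequence n ↦ ∑_{j=0}^{n−1} sup_{u ∈ Child^j(parent^n(v))} |λ(parent^n(v)→u)| / |λ(parent^n(v)→v)| tends to ∞ as n → ∞. -/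
/-!
Unrolling a `δ`-chain `f` for a continuous linear operator `T` gives
`f n = T ^ n (f 0) + ∑ j < n, T ^ j (e j)` with errors `‖e j‖ < δ`. So `x` is chain recurrent iff,
for every `δ`, some `x - T ^ n x` with `n ≥ 1` has the form `∑ j < n, T ^ j (e j)` with small `e j`
(`Attain`).

For `x` the unit vector at `v`, `T ^ n x` is `λ(parent^n v → v)` times the unit vector at
`parent^n v`, and acyclicity separates the two vertices. Since
`‖(T ^ j e) v‖ ≤ ‖e‖ * sup_{u ∈ Child^j v} ‖λ(v → u)‖` (`norm_pow_apply_le`), the coordinates of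
`x - T ^ n x` at `v` and at `parent^n v` bound the partial sums in (i) and (ii) below by `1 / δ`;
the sums in (ii) are nondecreasing in `n` (`ratio_mono`), so unboundedness is enough.

Conversely, a multiple of the unit vector at `v` is attained by placing small errors at nearly
optimal `u j ∈ Child^j v`, as soon as `∑ j < n, sup_{Child^j v} ‖λ‖` is large (`attain_single`).
Conditions (i) and (ii) therefore say that, for all large `n`, the unit vector at `v` and its image
under `T ^ n` are both attained. The vectors with this property form a closed subspace (`recSub`),
which is everything because it contains all unit vectors.
-/


open Filter Function
open scoped ENNReal NNReal

noncomputable section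

/-- For `u ∈ Child^n(v)`, `pathWeight parent w n u = λ(v → u)`, the product of the
weights along the path from `v = parent^[n] u` to `u`; in particular `λ(v → v) = 1`. -/
def pathWeight {V 𝕜 : Type*} [RCLike 𝕜] (parent : V → V) (w : V → 𝕜) (n : ℕ) (u : V) : 𝕜 :=
  ∏ i ∈ Finset.range n, w (parent^[i] u)

/-! ### Chains of linear operators -/

section Abstract

variable {𝕜 E : Type*} [RCLike 𝕜] [NormedAddCommGroup E] [NormedSpace 𝕜 E]

/-- `x` is the endpoint of an `n`-step pseudo-orbit of `T` that starts at `0` and makes errors of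
norm at most `δ`; the error `e j` is the one made `j` steps before the end. -/
def Attain (T : E →L[𝕜] E) (n : ℕ) (δ : ℝ) (x : E) : Prop :=
  ∃ e : ℕ → E, (∀ j, ‖e j‖ ≤ δ) ∧ x = ∑ j ∈ Finset.range n, (T ^ j) (e j)

lemma Attain.add {T : E →L[𝕜] E} {n : ℕ} {δ ε : ℝ} {x y : E} (hx : Attain T n δ x)
    (hy : Attain T n ε y) : Attain T n (δ + ε) (x + y) := by
  obtain ⟨e, he, rfl⟩ := hx
  obtain ⟨g, hg, rfl⟩ := hy
  refine ⟨fun j => e j + g j, fun j => (norm_add_le _ _).trans (add_le_add (he j) (hg j)), ?_⟩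
  simp [Finset.sum_add_distrib]

lemma Attain.smul {T : E →L[𝕜] E} {n : ℕ} {δ : ℝ} {x : E} (c : 𝕜) (hx : Attain T n δ x) :
    Attain T n (‖c‖ * δ) (c • x) := by
  obtain ⟨e, he, rfl⟩ := hx
  refine ⟨fun j => c • e j, fun j => ?_, ?_⟩
  · rw [norm_smul]
    exact mul_le_mul_of_nonneg_left (he j) (norm_nonneg c)
  · simp [Finset.smul_sum]

lemma Attain.mono {T : E →L[𝕜] E} {n : ℕ} {δ ε : ℝ} {x : E} (h : δ ≤ ε) (hx : Attain T n δ x) :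
    Attain T n ε x := by
  obtain ⟨e, he, rfl⟩ := hx
  exact ⟨e, fun j => (he j).trans h, rfl⟩

lemma attain_pow {T : E →L[𝕜] E} {n k : ℕ} (hk : k < n) {δ : ℝ} {x : E} (hx : ‖x‖ ≤ δ) :
    Attain T n δ ((T ^ k) x) := by
  refine ⟨fun j => if j = k then x else 0, fun j => ?_, ?_⟩
  · dsimp only
    split_ifs
    · exact hx
    · simpa using (norm_nonneg x).trans hx
  · rw [Finset.sum_eq_single k]
    · simp
    · intro j _ hj
      simp [hj]
    · intro h
      exact absurd (Finset.mem_range.2 hk) h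

/-- Closed form of a pseudo-orbit in terms of the errors. -/
lemma orbit_eq (T : E →L[𝕜] E) (f : ℕ → E) (k : ℕ) :
    f k = (T ^ k) (f 0) + ∑ j ∈ Finset.range k, (T ^ j) (f (k - j) - T (f (k - j - 1))) := by
  induction k with
  | zero => simp
  | succ k ih =>
    have h : ∑ j ∈ Finset.range (k + 1), (T ^ j) (f (k + 1 - j) - T (f (k + 1 - j - 1))) =
        T (∑ j ∈ Finset.range k, (T ^ j) (f (k - j) - T (f (k - j - 1)))) +
          (f (k + 1) - T (f k)) := by
      rw [Finset.sum_range_succ', map_sum]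
      simp [pow_succ']
    have h2 : (T ^ (k + 1)) (f 0) = T ((T ^ k) (f 0)) := by simp [pow_succ']
    rw [h, h2, ← add_assoc, ← map_add, ← ih]
    abel

lemma attain_of_chain (T : E →L[𝕜] E) {δ : ℝ} (hδ : 0 ≤ δ) {x : E}
    (h : HasDeltaChain (fun y => T y) δ x x) :
    ∃ n, 1 ≤ n ∧ Attain T n δ (x - (T ^ n) x) := by
  obtain ⟨n, hn, f, h0, h1, h2⟩ := h
  refine ⟨n, hn, fun j => if j < n then f (n - j) - T (f (n - j - 1)) else 0, fun j => ?_, ?_⟩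
  · dsimp only
    split_ifs with hj
    · have := (h2 (n - j) (by omega) (by omega)).le
      rwa [dist_comm, dist_eq_norm] at this
    · simpa using hδ
  · have := orbit_eq T f n
    rw [h0, h1] at this
    rw [sub_eq_of_eq_add' this]
    refine Finset.sum_congr rfl fun j hj => ?_
    simp [Finset.mem_range.1 hj]

lemma chain_of_attain (T : E →L[𝕜] E) {δ ε : ℝ} (hδ : δ < ε) {x : E} {n : ℕ} (hn : 1 ≤ n)
    (h : Attain T n δ (x - (T ^ n) x)) : HasDeltaChain (fun y => T y) ε x x := by
  obtain ⟨e, he, h⟩ := h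
  let f : ℕ → E := fun k => Nat.rec x (fun k y => T y + e (n - 1 - k)) k
  have hf : ∀ k, f (k + 1) = T (f k) + e (n - 1 - k) := fun k => rfl
  refine ⟨n, hn, f, rfl, ?_, ?_⟩
  · rw [orbit_eq T f n, show f 0 = x from rfl, ← eq_sub_iff_add_eq', h]
    refine Finset.sum_congr rfl fun j hj => ?_
    have hj := Finset.mem_range.1 hj
    obtain ⟨m, hm⟩ : ∃ m, n - j = m + 1 := ⟨n - j - 1, by omega⟩
    rw [hm, Nat.add_sub_cancel, hf, add_sub_cancel_left]
    congr 2
    omega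
  · intro l hl hln
    obtain ⟨m, rfl⟩ : ∃ m, l = m + 1 := ⟨l - 1, by omega⟩
    rw [Nat.add_sub_cancel, hf, dist_eq_norm]
    dsimp only
    rw [sub_add_cancel_left, norm_neg]
    exact (he _).trans_lt hδ

/-- The vectors `x` such that, for each error size `δ` and all long enough times `n`, both `x` and
`T ^ n x` are reached from `0` by an `n`-step pseudo-orbit. By linearity, attaining `-T ^ n x` from
`0` is the same as steering `x` to `0`. -/
def recSub (T : E →L[𝕜] E) : Submodule 𝕜 E where
  carrier := {x | ∀ δ : ℝ, 0 < δ → ∀ᶠ n in atTop, Attain T n δ x ∧ Attain T n δ ((T ^ n) x)}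
  add_mem' := by
    intro x y hx hy δ hδ
    filter_upwards [hx (δ / 2) (half_pos hδ), hy (δ / 2) (half_pos hδ)] with n h1 h2
    rw [map_add, ← add_halves δ]
    exact ⟨h1.1.add h2.1, h1.2.add h2.2⟩
  zero_mem' := by
    intro δ hδ
    filter_upwards with n
    rw [map_zero]
    have : Attain T n δ (0 : E) := ⟨fun _ => 0, fun _ => by simpa using hδ.le, by simp⟩
    exact ⟨this, this⟩
  smul_mem' := by
    intro c x hx δ hδ
    have hc : 0 < ‖c‖ + 1 := by positivity
    filter_upwards [hx (δ / (‖c‖ + 1)) (by positivity)] with n h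
    have hle : ‖c‖ * (δ / (‖c‖ + 1)) ≤ δ := by
      rw [← mul_div_assoc, div_le_iff₀ hc]
      nlinarith [norm_nonneg c]
    rw [map_smul]
    exact ⟨(h.1.smul c).mono hle, (h.2.smul c).mono hle⟩

lemma isClosed_recSub (T : E →L[𝕜] E) : IsClosed (recSub T : Set E) := by
  refine isClosed_of_closure_subset fun x hx δ hδ => ?_
  have hT : 0 < ‖T‖ + 1 := by positivity
  obtain ⟨y, hy, hxy⟩ := Metric.mem_closure_iff.1 hx (min (δ / 2) (δ / 2 / (‖T‖ + 1)))
    (by positivity)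
  rw [dist_eq_norm] at hxy
  have h1 : ‖x - y‖ ≤ δ / 2 := hxy.le.trans (min_le_left _ _)
  have h2 : ‖T (x - y)‖ ≤ δ / 2 := by
    have h3 := (le_div_iff₀ hT).1 (hxy.le.trans (min_le_right _ _))
    have := T.le_opNorm (x - y)
    nlinarith [norm_nonneg (x - y)]
  filter_upwards [hy (δ / 2) (half_pos hδ), eventually_ge_atTop 1] with n hn hn1
  have e1 : x = y + (T ^ 0) (x - y) := by simp
  have e2 : (T ^ n) x = (T ^ n) y + (T ^ (n - 1)) (T (x - y)) := by
    obtain ⟨m, rfl⟩ : ∃ m, n = m + 1 := ⟨n - 1, by omega⟩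
    simp [pow_succ]
  rw [e2]
  constructor
  · rw [e1, ← add_halves δ]
    exact hn.1.add (attain_pow (by omega) h1)
  · rw [← add_halves δ]
    exact hn.2.add (attain_pow (by omega) h2)

lemma chainRecurrent_of_recSub (T : E →L[𝕜] E) (h : ∀ x, x ∈ recSub T) :
    ChainRecurrent (fun x => T x) := by
  intro x δ hδ
  obtain ⟨n, hn, hn1⟩ := ((h x (δ / 4) (by positivity)).and (eventually_ge_atTop 1)).exists
  refine chain_of_attain T (δ := δ / 4 + ‖(-1 : 𝕜)‖ * (δ / 4)) ?_ hn1 ?_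
  · rw [norm_neg, norm_one]
    linarith
  · simpa [sub_eq_add_neg] using hn.1.add (hn.2.smul (-1 : 𝕜))

end Abstract

/-! ### Path weights and their suprema -/

section Tree

variable {V 𝕜 : Type*} [RCLike 𝕜] {parent : V → V} {w : V → 𝕜}

/-- The supremum of `‖λ(v → u)‖` over `u ∈ Child^n(v)`. -/
def supWeight (parent : V → V) (w : V → 𝕜) (n : ℕ) (v : V) : ℝ≥0∞ :=
  ⨆ u : {u : V // parent^[n] u = v}, (‖pathWeight parent w n (u : V)‖₊ : ℝ≥0∞)

lemma le_supWeight {n : ℕ} {u v : V} (h : parent^[n] u = v) :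
    (‖pathWeight parent w n u‖₊ : ℝ≥0∞) ≤ supWeight parent w n v :=
  le_iSup (fun u : {u : V // parent^[n] u = v} =>
    (‖pathWeight parent w n (u : V)‖₊ : ℝ≥0∞)) ⟨u, h⟩

lemma pathWeight_succ (n : ℕ) (u : V) :
    pathWeight parent w (n + 1) u = pathWeight parent w n u * w (parent^[n] u) :=
  Finset.prod_range_succ _ _

lemma pathWeight_ne_zero (hw : ∀ v, w v ≠ 0) (n : ℕ) (u : V) : pathWeight parent w n u ≠ 0 :=
  Finset.prod_ne_zero_iff.2 fun _ _ => hw _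

/-- The quantity in condition (ii). -/
def ratio (parent : V → V) (w : V → 𝕜) (v : V) (n : ℕ) : ℝ≥0∞ :=
  (∑ j ∈ Finset.range n, supWeight parent w j (parent^[n] v)) / ‖pathWeight parent w n v‖₊

lemma ratio_eq (v : V) (n : ℕ) :
    ∑ j ∈ Finset.range n, ⨆ u : {u : V // parent^[j] u = parent^[n] v},
      (‖pathWeight parent w j (u : V)‖₊ : ℝ≥0∞) / (‖pathWeight parent w n v‖₊ : ℝ≥0∞) =
    ratio parent w v n := by
  simp only [ratio, supWeight, div_eq_mul_inv, ← ENNReal.iSup_mul, ← Finset.sum_mul]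

lemma supWeight_succ_ge (n : ℕ) (v : V) :
    supWeight parent w n v * ‖w v‖₊ ≤ supWeight parent w (n + 1) (parent v) := by
  rw [supWeight, ENNReal.iSup_mul]
  refine iSup_le fun u => ?_
  have h : parent^[n + 1] (u : V) = parent v := by
    rw [iterate_succ_apply', u.2]
  refine le_trans (le_of_eq ?_) (le_supWeight (w := w) h)
  rw [pathWeight_succ, u.2, nnnorm_mul, ENNReal.coe_mul]

/-- Passing from `parent^n v` to its parent multiplies both the weights `λ(parent^n v → u)` and
`λ(parent^n v → v)` by the same factor, so the ratio can only grow. -/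
lemma ratio_mono (hw : ∀ v, w v ≠ 0) (v : V) : Monotone (ratio parent w v) := by
  refine monotone_nat_of_le_succ fun n => ?_
  have hc : (‖w (parent^[n] v)‖₊ : ℝ≥0∞) ≠ 0 := by simpa using hw _
  rw [ratio, ratio, pathWeight_succ, nnnorm_mul, ENNReal.coe_mul,
    ← ENNReal.mul_div_mul_right _ _ hc ENNReal.coe_ne_top]
  refine ENNReal.div_le_div_right ?_ _
  rw [Finset.sum_range_succ', Finset.sum_mul]
  refine le_trans (Finset.sum_le_sum fun j _ => ?_) le_self_add
  rw [iterate_succ_apply' parent n v]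
  exact supWeight_succ_ge j _

/-! ### The weighted backward shift -/

variable {T : lp (fun _ : V => 𝕜) 1 →L[𝕜] lp (fun _ : V => 𝕜) 1}

lemma T_single [DecidableEq V]
    (hT : ∀ (f : lp (fun _ : V => 𝕜) 1) (v : V),
      T f v = ∑' u : {u : V // parent u = v}, w (u : V) * f (u : V)) (u : V) (c : 𝕜) :
    T (lp.single 1 u c) = lp.single 1 (parent u) (c * w u) := by
  ext v
  rw [hT]
  by_cases h : parent u = v
  · subst h
    rw [tsum_eq_single ⟨u, rfl⟩]
    · simp [mul_comm]
    · intro x hx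
      have : (x : V) ≠ u := fun h => hx (Subtype.ext h)
      simp [this]
  · have : ∀ x : {x : V // parent x = v}, w (x : V) * (lp.single 1 u c :
        lp (fun _ : V => 𝕜) 1) (x : V) = 0 := by
      intro x
      have : (x : V) ≠ u := fun hx => h (hx ▸ x.2)
      simp [this]
    rw [tsum_congr this, tsum_zero, lp.single_apply, Pi.single_eq_of_ne (Ne.symm h)]

lemma pow_single [DecidableEq V]
    (hT : ∀ (f : lp (fun _ : V => 𝕜) 1) (v : V),
      T f v = ∑' u : {u : V // parent u = v}, w (u : V) * f (u : V)) (n : ℕ) (u : V) (c : 𝕜) :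
    (T ^ n) (lp.single 1 u c) = lp.single 1 (parent^[n] u) (c * pathWeight parent w n u) := by
  induction n with
  | zero => simp [pathWeight]
  | succ n ih =>
    rw [pow_succ', mul_apply_eq_comp, ih, T_single hT, pathWeight_succ,
      iterate_succ_apply', mul_assoc]

lemma supWeight_ne_top
    (hT : ∀ (f : lp (fun _ : V => 𝕜) 1) (v : V),
      T f v = ∑' u : {u : V // parent u = v}, w (u : V) * f (u : V)) (n : ℕ) (v : V) :
    supWeight parent w n v ≠ ⊤ := by
  classical
  refine ne_top_of_le_ne_top (b := (‖T ^ n‖₊ : ℝ≥0∞)) ENNReal.coe_ne_top (iSup_le fun u => ?_)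
  have := (T ^ n).le_opNorm (lp.single 1 (u : V) 1)
  rw [pow_single hT, lp.norm_single one_pos, lp.norm_single one_pos, one_mul, norm_one,
    mul_one] at this
  exact_mod_cast this

/-- A vertex of `Child^n(v)` whose weight is within a factor `2` of optimal. -/
lemma exists_near_sup (hsurj : Function.Surjective parent) (hw : ∀ v, w v ≠ 0)
    (hT : ∀ (f : lp (fun _ : V => 𝕜) 1) (v : V),
      T f v = ∑' u : {u : V // parent u = v}, w (u : V) * f (u : V)) (n : ℕ) (v : V) :
    ∃ u, parent^[n] u = v ∧ supWeight parent w n v ≤ 2 * ‖pathWeight parent w n u‖₊ := by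
  obtain ⟨u₀, hu₀⟩ := hsurj.iterate n v
  have hpos : supWeight parent w n v ≠ 0 := by
    intro h
    have := le_supWeight (w := w) hu₀
    rw [h] at this
    simp [pathWeight_ne_zero hw] at this
  obtain ⟨u, hu⟩ := lt_iSup_iff.1 (ENNReal.half_lt_self hpos (supWeight_ne_top hT n v))
  refine ⟨u, u.2, ?_⟩
  rw [mul_comm]
  exact (ENNReal.div_le_iff_le_mul (by simp) (by simp)).1 hu.le

/-- A multiple `c` of a unit vector is attained once `∑ j < n, sup_{Child^j v} ‖λ‖` is at least
`2 * ‖c‖ / δ`. -/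
lemma attain_single [DecidableEq V] (hsurj : Function.Surjective parent) (hw : ∀ v, w v ≠ 0)
    (hT : ∀ (f : lp (fun _ : V => 𝕜) 1) (v : V),
      T f v = ∑' u : {u : V // parent u = v}, w (u : V) * f (u : V)) {n : ℕ} (hn : 1 ≤ n) (v : V)
    (c : 𝕜) (δ : ℝ≥0)
    (h : 2 * (‖c‖₊ : ℝ≥0∞) ≤ δ * ∑ j ∈ Finset.range n, supWeight parent w j v) :
    Attain T n δ (lp.single 1 v c) := by
  choose u hu hu2 using fun j => exists_near_sup hsurj hw hT j v
  have ha : ∀ j, pathWeight parent w j (u j) ≠ 0 := fun j => pathWeight_ne_zero hw j _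
  set a : ℕ → 𝕜 := fun j => pathWeight parent w j (u j) with ha_def
  set L : ℝ := ∑ j ∈ Finset.range n, ‖a j‖ with hL_def
  have hL : 0 < L := by
    refine Finset.sum_pos (fun j _ => norm_pos_iff.2 (ha j)) ?_
    exact Finset.nonempty_range_iff.2 (by omega)
  have hcL : ‖c‖ ≤ δ * L := by
    have h1 : 2 * (‖c‖₊ : ℝ≥0∞) ≤ δ * ∑ j ∈ Finset.range n, (2 * ‖a j‖₊ : ℝ≥0∞) :=
      h.trans (by gcongr with j; exact hu2 j)
    rw [← Finset.mul_sum, mul_left_comm] at h1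
    have h2 : 2 * ‖c‖₊ ≤ 2 * (δ * ∑ j ∈ Finset.range n, ‖a j‖₊) := by exact_mod_cast h1
    have h3 : ‖c‖₊ ≤ δ * ∑ j ∈ Finset.range n, ‖a j‖₊ := le_of_mul_le_mul_left h2 two_pos
    have h4 : (‖c‖₊ : ℝ) ≤ (δ * ∑ j ∈ Finset.range n, ‖a j‖₊ : ℝ≥0) := h3
    push_cast at h4
    exact h4
  -- The errors all have norm `‖c‖ / L`, with phases chosen so that the contributions at `v` add up.
  refine ⟨fun j => lp.single 1 (u j) (c / L * (‖a j‖ / a j)), fun j => ?_, ?_⟩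
  · rw [lp.norm_single one_pos, norm_mul, norm_div, norm_div, RCLike.norm_ofReal,
      RCLike.norm_ofReal, abs_norm, div_self (norm_ne_zero_iff.2 (ha j)), mul_one,
      abs_of_pos hL, div_le_iff₀ hL]
    exact hcL
  · have hterm : ∀ j, (T ^ j) (lp.single 1 (u j) (c / L * (‖a j‖ / a j))) =
        lp.lsingle (𝕜 := 𝕜) (E := fun _ : V => 𝕜) 1 v (c / L * ‖a j‖) := by
      intro j
      rw [pow_single hT, hu, mul_assoc, div_mul_cancel₀ _ (ha j)]
      rfl
    have hsum : ∑ j ∈ Finset.range n, (c / L * ‖a j‖ : 𝕜) = c := by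
      rw [← Finset.mul_sum, ← RCLike.ofReal_sum, ← hL_def]
      exact div_mul_cancel₀ _ (RCLike.ofReal_ne_zero.2 hL.ne')
    simp only [hterm]
    rw [← map_sum, hsum]
    rfl

lemma norm_pow_apply_le
    (hT : ∀ (f : lp (fun _ : V => 𝕜) 1) (v : V),
      T f v = ∑' u : {u : V // parent u = v}, w (u : V) * f (u : V)) (n : ℕ)
    (f : lp (fun _ : V => 𝕜) 1) (v : V) :
    ‖(T ^ n) f v‖ ≤ (supWeight parent w n v).toReal * ‖f‖ := by
  classical
  have hf : HasSum (fun u => lp.single 1 u (f u)) f := lp.hasSum_single ENNReal.one_ne_top f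
  let φ : lp (fun _ : V => 𝕜) 1 →+ 𝕜 :=
    { toFun := fun g => (T ^ n) g v
      map_zero' := by simp
      map_add' := by simp }
  have hφ : Continuous φ :=
    ((continuous_apply v).comp lp.uniformContinuous_coe.continuous).comp (T ^ n).continuous
  have h1 : HasSum (fun u => (T ^ n) (lp.single 1 u (f u)) v) ((T ^ n) f v) := hf.map φ hφ
  have h2 : HasSum (fun u => ‖f u‖) ‖f‖ := by
    simpa using lp.hasSum_norm (p := 1) (by simp) f
  refine h1.norm_le_of_bounded (h2.mul_left _) fun u => ?_
  rw [pow_single hT, lp.single_apply, Pi.single_apply]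
  split_ifs with h
  · rw [norm_mul, mul_comm]
    gcongr
    have := ENNReal.toReal_mono (supWeight_ne_top hT n v) (le_supWeight (w := w) h.symm)
    simpa using this
  · simp only [norm_zero]
    positivity

lemma Attain.nnnorm_apply_le
    (hT : ∀ (f : lp (fun _ : V => 𝕜) 1) (v : V),
      T f v = ∑' u : {u : V // parent u = v}, w (u : V) * f (u : V)) {n : ℕ} {δ : ℝ≥0}
    {f : lp (fun _ : V => 𝕜) 1} (h : Attain T n δ f) (v : V) :
    (‖f v‖₊ : ℝ≥0∞) ≤ δ * ∑ j ∈ Finset.range n, supWeight parent w j v := by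
  obtain ⟨e, he, rfl⟩ := h
  have hfin : ∀ j ∈ Finset.range n, supWeight parent w j v ≠ ⊤ :=
    fun j _ => supWeight_ne_top hT j v
  rw [← ENNReal.toReal_le_toReal ENNReal.coe_ne_top
    (ENNReal.mul_ne_top ENNReal.coe_ne_top (ENNReal.sum_ne_top.2 hfin)), ENNReal.toReal_mul,
    ENNReal.toReal_sum hfin, ENNReal.coe_toReal, ENNReal.coe_toReal, coe_nnnorm, Finset.mul_sum,
    lp.coeFn_sum, Finset.sum_apply]
  refine norm_sum_le_of_le _ fun j _ => ?_
  rw [mul_comm]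
  exact (norm_pow_apply_le hT j (e j) v).trans
    (mul_le_mul_of_nonneg_left (he j) ENNReal.toReal_nonneg)

end Tree

/-- Characterization of chain recurrence of a weighted backward shift on `ℓ¹(V)` over an
unrooted leafless directed tree. -/
theorem stmt5 {V : Type*} [Countable V] {𝕜 : Type*} [RCLike 𝕜]
    (parent : V → V) (hsurj : Function.Surjective parent)
    (hacyc : ∀ (v : V) (n : ℕ), 1 ≤ n → parent^[n] v ≠ v)
    (hconn : ∀ u v : V, ∃ m k : ℕ, parent^[m] u = parent^[k] v)
    (w : V → 𝕜) (hw : ∀ v : V, w v ≠ 0)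
    (T : lp (fun _ : V => 𝕜) 1 →L[𝕜] lp (fun _ : V => 𝕜) 1)
    (hT : ∀ (f : lp (fun _ : V => 𝕜) 1) (v : V),
      T f v = ∑' u : {u : V // parent u = v}, w (u : V) * f (u : V)) :
    ChainRecurrent (fun f => T f) ↔
      ∀ v : V,
        (∑' n : ℕ, ⨆ u : {u : V // parent^[n + 1] u = v},
            (‖pathWeight parent w (n + 1) (u : V)‖₊ : ℝ≥0∞)) = ⊤ ∧
          Tendsto (fun n : ℕ => ∑ j ∈ Finset.range n,
              ⨆ u : {u : V // parent^[j] u = parent^[n] v},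
                (‖pathWeight parent w j (u : V)‖₊ : ℝ≥0∞) /
                  (‖pathWeight parent w n v‖₊ : ℝ≥0∞))
            atTop (nhds ⊤) := by
  classical
  simp only [ratio_eq]
  change _ ↔ ∀ v : V, (∑' n : ℕ, supWeight parent w (n + 1) v) = ⊤ ∧ Tendsto (ratio parent w v) _ _
  -- The term `n = 0` missing from the series in (i) is finite.
  have hi : ∀ v, (∑' n : ℕ, supWeight parent w (n + 1) v) = ⊤ ↔
      (∑' n : ℕ, supWeight parent w n v) = ⊤ := fun v => by
    rw [tsum_eq_zero_add' (f := fun n => supWeight parent w n v) ENNReal.summable,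
      ENNReal.add_eq_top]
    simp [supWeight_ne_top hT]
  simp only [hi]
  constructor
  · intro hCR v
    have key : ∀ δ : ℝ≥0, 0 < δ → ∃ n, 1 ≤ δ * ∑ j ∈ Finset.range n, supWeight parent w j v ∧
        1 ≤ δ * ratio parent w v n := by
      intro δ hδ
      obtain ⟨n, hn, h⟩ := attain_of_chain T (by positivity)
        (hCR (lp.single 1 v 1) δ (by exact_mod_cast hδ))
      have hne := hacyc v n hn
      have h1 := h.nnnorm_apply_le hT v
      have h2 := h.nnnorm_apply_le hT (parent^[n] v)
      rw [pow_single hT] at h1 h2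
      refine ⟨n, by simpa [hne.symm] using h1, ?_⟩
      have h3 : (‖pathWeight parent w n v‖₊ : ℝ≥0∞) ≤
          δ * ∑ j ∈ Finset.range n, supWeight parent w j (parent^[n] v) := by
        simpa [hne] using h2
      rw [ratio, ← mul_div_assoc, ENNReal.le_div_iff_mul_le
        (Or.inl (by simpa using pathWeight_ne_zero hw n v)) (Or.inl ENNReal.coe_ne_top), one_mul]
      exact h3
    have key2 : ∀ x : ℝ≥0, ∃ n, x ≤ ∑ j ∈ Finset.range n, supWeight parent w j v ∧
        x ≤ ratio parent w v n := by
      intro x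
      obtain ⟨n, h1, h2⟩ := key (x + 1)⁻¹ (by positivity)
      have hx : (((x + 1)⁻¹ : ℝ≥0) : ℝ≥0∞) = ((x + 1 : ℝ≥0) : ℝ≥0∞)⁻¹ :=
        ENNReal.coe_inv (by positivity)
      have hxle : (x : ℝ≥0∞) ≤ ((x + 1 : ℝ≥0) : ℝ≥0∞) := by
        exact_mod_cast le_self_add
      rw [hx, mul_comm, ← div_eq_mul_inv, ENNReal.le_div_iff_mul_le (by simp) (by simp),
        one_mul] at h1 h2
      exact ⟨n, hxle.trans h1, hxle.trans h2⟩
    constructor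
    · refine ENNReal.eq_top_of_forall_nnreal_le fun x => ?_
      obtain ⟨n, h1, -⟩ := key2 x
      exact h1.trans (ENNReal.sum_le_tsum _)
    · refine ENNReal.tendsto_nhds_top_iff_nnreal.2 fun x => ?_
      obtain ⟨n, -, h2⟩ := key2 (x + 1)
      filter_upwards [eventually_ge_atTop n] with m hm
      refine lt_of_lt_of_le ?_ (h2.trans (ratio_mono hw v hm))
      exact_mod_cast lt_add_one x
  · intro h
    refine chainRecurrent_of_recSub T fun x => ?_
    have hsingle : ∀ v, lp.single 1 v (1 : 𝕜) ∈ recSub T := by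
      intro v δ hδ
      lift δ to ℝ≥0 using hδ.le
      have hδ : 0 < δ := by exact_mod_cast hδ
      have t1 := ENNReal.tendsto_nat_tsum fun j => supWeight parent w j v
      rw [(h v).1] at t1
      have hlt : ∀ y : ℝ≥0∞, (2 / δ : ℝ≥0) < y → 2 ≤ δ * y := by
        intro y hy
        calc (2 : ℝ≥0∞) = ((δ * (2 / δ) : ℝ≥0) : ℝ≥0∞) := by
              rw [mul_div_cancel₀ _ hδ.ne']; rfl
          _ = δ * (2 / δ : ℝ≥0) := ENNReal.coe_mul _ _
          _ ≤ δ * y := by gcongr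
      filter_upwards [ENNReal.tendsto_nhds_top_iff_nnreal.1 t1 (2 / δ),
        ENNReal.tendsto_nhds_top_iff_nnreal.1 (h v).2 (2 / δ), eventually_ge_atTop 1]
        with n h1 h2 hn
      refine ⟨attain_single hsurj hw hT hn v 1 δ (by simpa using hlt _ h1), ?_⟩
      rw [pow_single hT, one_mul]
      refine attain_single hsurj hw hT hn _ _ δ ?_
      have h3 := hlt _ h2
      rwa [ratio, ← mul_div_assoc, ENNReal.le_div_iff_mul_le
        (Or.inl (by simpa using pathWeight_ne_zero hw n v)) (Or.inl ENNReal.coe_ne_top)] at h3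
    have hx : HasSum (fun u => lp.single 1 u (x u)) x := lp.hasSum_single ENNReal.one_ne_top x
    refine (isClosed_recSub T).mem_of_tendsto hx (Eventually.of_forall fun s => ?_)
    refine Submodule.sum_mem _ fun u _ => ?_
    have : lp.single 1 u (x u) = x u • (lp.single 1 u (1 : 𝕜) : lp (fun _ : V => 𝕜) 1) := by
      rw [← lp.single_smul]
      simp
    rw [this]
    exact Submodule.smul_mem _ _ (hsingle u)
end
end

section
/- Let (V, E) be a rooted leafless directed tree and let λ = (λ_n)_{n≥1} give a symmetric weight: the weight at each vertex of the n-th generation Gen_n = Child^n(root) (n ≥ 1) is the nonzero scalar λ_n. Suppose the symmetric weighted backward shift B_λ defines a bounded linear operator on ℓ1(V). Then B_λ is chain recurrent on ℓ1(V) if and only if ∑_{n=1}^∞ ∏_{i=1}^n |λ_i| = ∞. -/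
/-!
Perturbing an orbit at each step writes the end point of a chain of length `n` as
`T ^ n x + ∑_{j < n} T ^ j (e j)` with small errors `e j` (`hasDeltaChain_iff`). Let
`P n = ∏_{i=1}^n |λ_i|`.

If `∑ P n < ∞`, then the root coordinate of `T ^ n f` is bounded by `P n * ‖f‖`, because `T ^ n f`
evaluated at the root is `∏ λ_i` times the sum of `f` over the `n`-th generation. A chain starting
at the basis vector of the root, which `T` kills, therefore has at the root an end coordinate of
size at most `δ * ∑ P n`, so it cannot come back when `δ` is small.

If `∑ P n = ∞`, the vectors that can be reached from `0` by chains of all large lengths, for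
every `δ`, form a closed additive submonoid (`reach`, `isClosed_reach`). It contains `c • e_v`
for every vertex `v`: choose an infinite path of descendants `v = u 0, u 1, …`; as `T ^ j` maps
`e_{u j}` to a multiple of `e_v` of modulus `P (depth v + j) / P (depth v)`, whose sum over `j`
diverges, small multiples of the `e_{u j}` add up to `c • e_v`. Hence everything can be reached
from `0`. Conversely each vector is close to a finitely supported one, which `T` sends to `0` in
finitely many steps, and `chainRecurrent_of_reach` combines the two.
-/

open Filter Function
open scoped ENNReal NNReal

noncomputable section

/-! ### Chains of linear operators -/

/-- A chain is an orbit with one small error added at each step; `e j` is the error that is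
introduced `j` steps before the end. -/
lemma hasDeltaChain_iff_s18 {𝕜 E : Type*} [RCLike 𝕜] [NormedAddCommGroup E] [NormedSpace 𝕜 E]
    (T : E →L[𝕜] E) (δ : ℝ) (x y : E) :
    HasDeltaChain (fun f => T f) δ x y ↔ ∃ n : ℕ, 1 ≤ n ∧ ∃ e : ℕ → E, (∀ j < n, ‖e j‖ < δ) ∧
      y = (T ^ n) x + ∑ j ∈ Finset.range n, (T ^ j) (e j) := by
  constructor
  · rintro ⟨n, hn, f, rfl, rfl, hf⟩
    refine ⟨n, hn, ?_⟩
    clear hn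
    induction n with
    | zero => exact ⟨fun _ => 0, by simp, by simp⟩
    | succ n ih =>
      obtain ⟨e, he, hfe⟩ := ih fun l h1 h2 => hf l h1 (by omega)
      have hlast := hf (n + 1) (by omega) le_rfl
      rw [dist_comm, dist_eq_norm] at hlast
      refine ⟨fun j => Nat.casesOn j (f (n + 1) - T (f n)) e, ?_, ?_⟩
      · rintro (_ | j) hj
        · simpa using hlast
        · exact he j (by omega)
      · rw [Finset.sum_range_succ']
        have h : T (f n) = (T ^ (n + 1)) (f 0) + ∑ j ∈ Finset.range n, (T ^ (j + 1)) (e j) := by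
          conv_lhs => rw [hfe]
          simp [map_add, map_sum, pow_succ']
        rw [← add_assoc, ← h]
        simp
  · rintro ⟨n, hn, e, he, rfl⟩
    refine ⟨n, hn, fun l => (T ^ l) x + ∑ j ∈ Finset.range l, (T ^ j) (e (n - l + j)),
      by simp, by simp, ?_⟩
    rintro (_ | l) h1 h2
    · omega
    have hidx : ∀ j, n - (l + 1) + (j + 1) = n - l + j := by intro j; omega
    have h := he (n - (l + 1)) (by omega)
    have hT : ∀ (j : ℕ) (z : E), (T ^ (j + 1)) z = T ((T ^ j) z) := fun j z => by
      rw [pow_succ']; rfl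
    simp only [Nat.add_sub_cancel, Finset.sum_range_succ', hidx, hT, ← map_sum,
      dist_comm (T _), dist_eq_norm]
    rw [← add_assoc, ← map_add]
    simpa using h

/-- The vectors that are, for every `δ > 0`, the end point of a `δ`-chain from `0` of every
sufficiently large length. -/
def reach {𝕜 E : Type*} [RCLike 𝕜] [NormedAddCommGroup E] [NormedSpace 𝕜 E]
    (T : E →L[𝕜] E) : AddSubmonoid E where
  carrier := {y | ∀ δ : ℝ, 0 < δ → ∀ᶠ n in atTop, ∃ e : ℕ → E, (∀ j, ‖e j‖ < δ) ∧
    ∑ j ∈ Finset.range n, (T ^ j) (e j) = y}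
  zero_mem' := fun δ hδ => Eventually.of_forall fun n => ⟨fun _ => 0, by simpa using hδ, by simp⟩
  add_mem' := by
    intro a b ha hb δ hδ
    filter_upwards [ha (δ / 2) (by positivity), hb (δ / 2) (by positivity)]
    rintro n ⟨e, he, rfl⟩ ⟨e', he', rfl⟩
    refine ⟨fun j => e j + e' j, fun j => ?_, by simp [Finset.sum_add_distrib]⟩
    linarith [norm_add_le (e j) (e' j), he j, he' j]

lemma isClosed_reach {𝕜 E : Type*} [RCLike 𝕜] [NormedAddCommGroup E] [NormedSpace 𝕜 E]
    (T : E →L[𝕜] E) : IsClosed (reach T : Set E) := by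
  refine isClosed_of_closure_subset fun y hy δ hδ => ?_
  obtain ⟨z, hz, hyz⟩ := Metric.mem_closure_iff.1 hy (δ / 2) (by positivity)
  filter_upwards [hz (δ / 2) (by positivity), eventually_ge_atTop 1]
  rintro n ⟨e, he, rfl⟩ hn
  obtain ⟨k, rfl⟩ : ∃ k, n = k + 1 := ⟨n - 1, by omega⟩
  rw [dist_eq_norm] at hyz
  -- the discrepancy `y - z` is absorbed by the last error of the chain
  refine ⟨fun j => if j = 0 then e 0 + (y - ∑ j ∈ Finset.range (k + 1), (T ^ j) (e j)) else e j,
    fun j => ?_, ?_⟩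
  · by_cases hj : j = 0
    · simp only [hj, if_true]
      refine (norm_add_le _ _).trans_lt ?_
      linarith [he 0]
    · simp only [hj, if_false]
      linarith [he j]
  · rw [Finset.sum_range_succ', Finset.sum_range_succ']
    simp only [Nat.add_eq_zero_iff, one_ne_zero, and_false, if_false, if_true, pow_zero,
      one_apply_eq_self]
    abel

/-- The vectors killed by some power of `T`. -/
def nilp {𝕜 E : Type*} [RCLike 𝕜] [NormedAddCommGroup E] [NormedSpace 𝕜 E]
    (T : E →L[𝕜] E) : AddSubmonoid E where
  carrier := {y | ∀ᶠ n in atTop, (T ^ n) y = 0}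
  zero_mem' := Eventually.of_forall fun n => by simp
  add_mem' := by
    intro a b ha hb
    filter_upwards [ha, hb] with n h1 h2
    rw [map_add, h1, h2, add_zero]

/-- A vector returns to itself by following the orbit of a nearby vector down to `0`, while the
errors of a chain from `0` of the same length build it up again. -/
lemma chainRecurrent_of_reach {𝕜 E : Type*} [RCLike 𝕜] [NormedAddCommGroup E] [NormedSpace 𝕜 E]
    (T : E →L[𝕜] E) (h1 : ∀ x, x ∈ reach T) (h2 : ∀ x, x ∈ closure (nilp T : Set E)) :
    ChainRecurrent (fun f => T f) := by
  intro x δ hδ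
  rw [hasDeltaChain_iff_s18]
  have hpos : 0 < ‖T‖ + 1 := by positivity
  obtain ⟨y, hy, hxy⟩ := Metric.mem_closure_iff.1 (h2 x) (δ / 2 / (‖T‖ + 1)) (by positivity)
  rw [dist_eq_norm, lt_div_iff₀ hpos] at hxy
  have hT : ‖T (x - y)‖ < δ / 2 := by
    refine lt_of_le_of_lt ?_ hxy
    have := T.le_opNorm (x - y)
    nlinarith [norm_nonneg (x - y)]
  obtain ⟨n, ⟨e, he, hex⟩, hny, hn⟩ :=
    ((h1 x (δ / 2) (by positivity)).and (hy.and (eventually_ge_atTop 1))).exists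
  obtain ⟨k, rfl⟩ : ∃ k, n = k + 1 := ⟨n - 1, by omega⟩
  -- the first step moves from the orbit of `x` to that of `y`, which ends at `0`
  refine ⟨k + 1, hn, fun j => if j = k then e k - T (x - y) else e j, fun j _ => ?_, ?_⟩
  · by_cases hj : j = k
    · simp only [hj, if_true]
      refine (norm_sub_le _ _).trans_lt ?_
      linarith [he k]
    · simp only [hj, if_false]
      linarith [he j]
  · rw [Finset.sum_range_succ] at hex ⊢
    have hs : ∑ j ∈ Finset.range k, (T ^ j) (if j = k then e k - T (x - y) else e j)
        = ∑ j ∈ Finset.range k, (T ^ j) (e j) :=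
      Finset.sum_congr rfl fun j hj => by rw [if_neg (Finset.mem_range.1 hj).ne]
    have hy' : (T ^ k) (T y) = 0 := by simpa [pow_succ] using hny
    rw [hs]
    simp only [if_true, map_sub, hy', pow_succ, mul_apply_eq_comp]
    conv_lhs => rw [← hex]
    abel

/-! ### Divergent weight products -/

/-- If the scalars `a j` have a divergent sum of moduli and `T ^ j` maps `g j c` to `a j * c` times
a fixed direction, then all multiples of this direction can be reached from `0`. -/
lemma mem_reach_of_tendsto {𝕜 E : Type*} [RCLike 𝕜] [NormedAddCommGroup E] [NormedSpace 𝕜 E]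
    (T : E →L[𝕜] E) (g : ℕ → 𝕜 → E) (hg : ∀ j c, ‖g j c‖ = ‖c‖) (a : ℕ → 𝕜) (ha : ∀ j, a j ≠ 0)
    (s : 𝕜 →+ E) (hs : ∀ j c, (T ^ j) (g j c) = s (a j * c))
    (hdiv : Tendsto (fun n => ∑ j ∈ Finset.range n, ‖a j‖) atTop atTop) (c : 𝕜) :
    s c ∈ reach T := by
  intro δ hδ
  filter_upwards [hdiv.eventually_gt_atTop (‖c‖ / δ), hdiv.eventually_gt_atTop 0] with n h1 h2
  set S := ∑ j ∈ Finset.range n, ‖a j‖ with hS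
  -- the phase of the error makes all contributions positive multiples of `c`
  refine ⟨fun j => g j (c * ((‖a j‖ : 𝕜) / a j) / (S : 𝕜)), fun j => ?_, ?_⟩
  · have : ‖a j‖ ≠ 0 := norm_ne_zero_iff.2 (ha j)
    rw [hg, norm_div, norm_mul, norm_div, RCLike.norm_ofReal, RCLike.norm_ofReal, abs_norm,
      div_self this, mul_one, abs_of_pos h2]
    rw [div_lt_iff₀ hδ] at h1
    rw [div_lt_iff₀ h2]
    linarith
  · simp only [hs]
    rw [← map_sum]
    congr 1
    have hS0 : (S : 𝕜) ≠ 0 := by exact_mod_cast h2.ne'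
    have : ∀ j ∈ Finset.range n, a j * (c * ((‖a j‖ : 𝕜) / a j) / (S : 𝕜))
        = (‖a j‖ : 𝕜) * (c / S) := fun j _ => by
      have := ha j
      field_simp
    rw [Finset.sum_congr rfl this, ← Finset.sum_mul, ← RCLike.ofReal_sum, ← hS]
    field_simp

/-- The tail products of the weights have divergent sum as soon as the full products do. -/
lemma tendsto_tail_products {𝕜 : Type*} [RCLike 𝕜] (w : ℕ → 𝕜)
    (h : ¬ Summable fun n => ∏ i ∈ Finset.range n, ‖w (i + 1)‖) (m : ℕ) :
    Tendsto (fun n => ∑ j ∈ Finset.range n, ‖∏ i ∈ Finset.range j, w (m + i + 1)‖)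
      atTop atTop := by
  rw [← not_summable_iff_tendsto_nat_atTop_of_nonneg fun _ => norm_nonneg _]
  intro hs
  refine h ((summable_nat_add_iff m).1 ?_)
  refine (hs.mul_left (∏ i ∈ Finset.range m, ‖w (i + 1)‖)).congr fun j => ?_
  rw [add_comm j m, Finset.prod_range_add, norm_prod]

lemma tsum_eq_top_iff {𝕜 : Type*} [RCLike 𝕜] (w : ℕ → 𝕜) :
    (∑' n : ℕ, ∏ i ∈ Finset.Icc 1 (n + 1), (‖w i‖₊ : ℝ≥0∞)) = ⊤ ↔
      ¬ Summable fun n => ∏ i ∈ Finset.range n, ‖w (i + 1)‖ := by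
  have h : ∀ n, ∏ i ∈ Finset.Icc 1 (n + 1), (‖w i‖₊ : ℝ≥0∞)
      = ((∏ i ∈ Finset.range (n + 1), ‖w (i + 1)‖₊ : ℝ≥0) : ℝ≥0∞) := by
    intro n
    rw [Finset.range_eq_Ico, Finset.prod_Ico_add' (fun i => ‖w i‖₊) 0 (n + 1) 1]
    push_cast
    rfl
  simp only [h]
  rw [← not_iff_not, not_not, ← ne_eq, ENNReal.tsum_coe_ne_top_iff_summable_coe,
    ← summable_nat_add_iff (f := fun n => ∏ i ∈ Finset.range n, ‖w (i + 1)‖) 1]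
  push_cast
  rfl

/-! ### Shifts on trees -/

/-- A symmetric weighted backward shift on `ℓ¹(V)` over a rooted leafless directed
tree (every vertex of the `n`-th generation, i.e. of depth `n ≥ 1`, carries the
nonzero weight `w n`) is chain recurrent iff `∑_{n≥1} ∏_{i=1}^n |λ_i| = ∞`. -/
theorem stmt18 {V : Type*} [Countable V] {𝕜 : Type*} [RCLike 𝕜]
    (root : V) (parent : V → V) (depth : V → ℕ)
    (hroot : parent root = root) (hdepth0 : depth root = 0)
    (hdepth : ∀ v : V, v ≠ root → depth v = depth (parent v) + 1)
    (hleafless : ∀ v : V, ∃ u : V, parent u = v ∧ depth u = depth v + 1)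
    (w : ℕ → 𝕜) (hw : ∀ n : ℕ, 1 ≤ n → w n ≠ 0)
    (T : lp (fun _ : V => 𝕜) 1 →L[𝕜] lp (fun _ : V => 𝕜) 1)
    (hT : ∀ (f : lp (fun _ : V => 𝕜) 1) (v : V),
      T f v = ∑' u : {u : V // parent u = v ∧ depth u = depth v + 1},
        w (depth (u : V)) * f (u : V)) :
    ChainRecurrent (fun f => T f) ↔
      (∑' n : ℕ, ∏ i ∈ Finset.Icc 1 (n + 1), (‖w i‖₊ : ℝ≥0∞)) = ⊤ := by
  classical
  rw [tsum_eq_top_iff]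
  have hp1 : (0 : ℝ≥0∞) < 1 := zero_lt_one
  have hTs : ∀ (u : V) (c : 𝕜), T (lp.single 1 u c) =
      if depth u = 0 then 0 else lp.single 1 (parent u) (w (depth u) * c) := by
    intro u c
    ext v
    rw [hT]
    by_cases hu : parent u = v ∧ depth u = depth v + 1
    · obtain ⟨rfl, h0⟩ := hu
      rw [tsum_eq_single ⟨u, rfl, h0⟩, if_neg (by omega)]
      · simp
      · rintro ⟨u', hu'⟩ hne
        have : u' ≠ u := fun h => hne (Subtype.ext h)
        simp [this]
    · have hz : ∀ u' : {u : V // parent u = v ∧ depth u = depth v + 1},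
          w (depth (u' : V)) * (lp.single (E := fun _ : V => 𝕜) 1 u c) (u' : V) = 0 := by
        rintro ⟨u', hu'⟩
        have : u' ≠ u := by rintro rfl; exact hu hu'
        simp [this]
      simp only [hz, tsum_zero]
      split_ifs with h0
      · simp
      · have hne : v ≠ parent u := by
          rintro rfl
          exact hu ⟨rfl, hdepth u fun h => h0 (by rw [h, hdepth0])⟩
        rw [lp.single_apply_ne _ _ _ hne]
  have hdepar : ∀ u, depth u ≠ 0 → depth (parent u) + 1 = depth u := fun u h0 =>
    (hdepth u fun h => h0 (by rw [h, hdepth0])).symm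
  have hdense : ∀ f : lp (fun _ : V => 𝕜) 1,
      HasSum (fun v => lp.single (E := fun _ : V => 𝕜) 1 v (f v)) f := fun f =>
    lp.hasSum_single ENNReal.one_ne_top f
  constructor
  · intro hrec hsum
    -- the root coordinate of `T ^ n`, on basis vectors and then in general
    have hev : ∀ (n : ℕ) (v : V) (c : 𝕜), (T ^ n) (lp.single 1 v c) root =
        if depth v = n then (∏ i ∈ Finset.range n, w (i + 1)) * c else 0 := by
      intro n
      induction n with
      | zero =>
        intro v c
        by_cases hv : v = root
        · subst hv
          simp [hdepth0]
        · rw [if_neg (by rw [hdepth v hv]; omega)]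
          exact lp.single_apply_ne _ _ _ (Ne.symm hv)
      | succ n ih =>
        intro v c
        rw [pow_succ, mul_apply_eq_comp, hTs]
        by_cases h0 : depth v = 0
        · rw [if_pos h0, if_neg (by omega), map_zero]
          rfl
        · rw [if_neg h0, ih]
          have := hdepar v h0
          by_cases hn : depth v = n + 1
          · rw [if_pos (by omega), if_pos hn, hn, Finset.prod_range_succ, mul_assoc]
          · rw [if_neg (by omega), if_neg hn]
    have hbd : ∀ (n : ℕ) (f : lp (fun _ : V => 𝕜) 1),
        ‖(T ^ n) f root‖ ≤ (∏ i ∈ Finset.range n, ‖w (i + 1)‖) * ‖f‖ := by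
      intro n f
      have h1 := ((lp.evalCLM 𝕜 (fun _ : V => 𝕜) 1 root).comp (T ^ n)).hasSum (hdense f)
      have h2 := (lp.hasSum_norm (p := 1) (by simp) f).mul_left
        (∏ i ∈ Finset.range n, ‖w (i + 1)‖)
      simp only [ENNReal.toReal_one, Real.rpow_one] at h2
      refine h1.norm_le_of_bounded h2 fun v => ?_
      change ‖(T ^ n) (lp.single 1 v (f v)) root‖ ≤ _
      rw [hev]
      split_ifs
      · rw [norm_mul, norm_prod]
      · rw [norm_zero]
        positivity
    set S := ∑' n, ∏ i ∈ Finset.range n, ‖w (i + 1)‖ with hS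
    have hS0 : 0 ≤ S := tsum_nonneg fun n => by positivity
    have hδ : 0 < 1 / (S + 1) := by positivity
    obtain ⟨n, hn, e, he, hx⟩ := (hasDeltaChain_iff_s18 T _ _ _).1
      (hrec (lp.single 1 root (1 : 𝕜)) (1 / (S + 1)) hδ)
    have hr := congrArg (fun f => lp.evalCLM 𝕜 (fun _ : V => 𝕜) 1 root f) hx
    simp only [map_add, map_sum] at hr
    change lp.single (E := fun _ : V => 𝕜) 1 root (1 : 𝕜) root =
      (T ^ n) (lp.single 1 root (1 : 𝕜)) root
        + ∑ j ∈ Finset.range n, (T ^ j) (e j) root at hr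
    rw [hev, if_neg (by omega), zero_add, lp.single_apply_self] at hr
    have hle : ‖∑ j ∈ Finset.range n, (T ^ j) (e j) root‖ ≤ S * (1 / (S + 1)) := by
      refine (norm_sum_le _ _).trans ?_
      calc _ ≤ ∑ j ∈ Finset.range n, (∏ i ∈ Finset.range j, ‖w (i + 1)‖) * (1 / (S + 1)) :=
            Finset.sum_le_sum fun j hj => (hbd j (e j)).trans <|
              mul_le_mul_of_nonneg_left (he j (Finset.mem_range.1 hj)).le (by positivity)
        _ = (∑ j ∈ Finset.range n, ∏ i ∈ Finset.range j, ‖w (i + 1)‖) * (1 / (S + 1)) :=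
            (Finset.sum_mul _ _ _).symm
        _ ≤ _ := mul_le_mul_of_nonneg_right
            (hsum.sum_le_tsum _ fun j _ => by positivity) hδ.le
    rw [← hr, norm_one, mul_one_div, le_div_iff₀ (by positivity)] at hle
    linarith
  · intro hdiv
    refine chainRecurrent_of_reach T (fun x => ?_) (fun x => ?_)
    · refine (isClosed_reach T).mem_of_tendsto (hdense x)
        (Eventually.of_forall fun s => sum_mem fun v _ => ?_)
      choose ch hch1 hch2 using hleafless
      have hd : ∀ j, depth (ch^[j] v) = depth v + j := by
        intro j
        induction j with
        | zero => simp
        | succ j ih => rw [Function.iterate_succ_apply', hch2, ih]; omega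
      have hpath : ∀ j c, (T ^ j) (lp.single 1 (ch^[j] v) c) =
          lp.single 1 v ((∏ i ∈ Finset.range j, w (depth v + i + 1)) * c) := by
        intro j
        induction j with
        | zero => intro c; simp
        | succ j ih =>
          intro c
          rw [pow_succ, mul_apply_eq_comp, hTs, if_neg (by rw [hd]; omega),
            Function.iterate_succ_apply', hch1, ih, ← Function.iterate_succ_apply' ch, hd,
            Finset.prod_range_succ, mul_assoc, add_assoc]
      exact mem_reach_of_tendsto T (fun j c => lp.single 1 (ch^[j] v) c)
        (fun j c => lp.norm_single hp1 _ _) _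
        (fun j => Finset.prod_ne_zero_iff.2 fun i _ => hw _ (by omega))
        (lp.singleAddMonoidHom (E := fun _ : V => 𝕜) 1 v) hpath
        (tendsto_tail_products w hdiv (depth v)) (x v)
    · refine mem_closure_of_tendsto (hdense x)
        (Eventually.of_forall fun s => sum_mem fun v _ => ?_)
      have hnil : ∀ n v c, depth v < n →
          (T ^ n) (lp.single (E := fun _ : V => 𝕜) 1 v c) = 0 := by
        intro n
        induction n with
        | zero => intro v c h; omega
        | succ n ih =>
          intro v c h
          rw [pow_succ, mul_apply_eq_comp, hTs]
          split_ifs with h0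
          · simp
          · exact ih _ _ (by have := hdepar v h0; omega)
      filter_upwards [eventually_gt_atTop (depth v)] with n hn
      exact hnil n v _ hn
end
end
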